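/- Let a, b, c ∈ ℕ and set D := b² − 4ac ∈ ℤ and X := { a x² + b x y + c y² : x, y ∈ ℕ }. If D = 0 or D is not a perfect square (i.e., D ≠ z² for every z ∈ ℤ), then X is small. -/

import Mathlib

open Set Filter Topology

/-- An upper quasi-density on ℕ. -/
def IsUpperQuasiDensity (μ : Set ℕ → ℝ) : Prop :=
  μ Set.univ = 1 ∧
  (∀ X : Set ℕ, μ X ≤ 1) ∧
  (∀ X Y : Set ℕ, μ (X ∪ Y) ≤ μ X + μ Y) ∧
  (∀ (X : Set ℕ) (k : ℕ), 0 < k → μ ((fun x => k * x) '' X) = μ X / k) ∧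
  (∀ (X : Set ℕ) (h : ℕ), μ ((fun x => x + h) '' X) = μ X)

/-- An upper density on ℕ: a monotone upper quasi-density. -/
def IsUpperDensity (μ : Set ℕ → ℝ) : Prop :=
  IsUpperQuasiDensity μ ∧ ∀ X Y : Set ℕ, X ⊆ Y → μ X ≤ μ Y

/-- A set of naturals is small if every upper quasi-density vanishes on it. -/
def SmallSet (X : Set ℕ) : Prop :=
  ∀ μ : Set ℕ → ℝ, IsUpperQuasiDensity μ → μ X = 0

/-- The upper asymptotic density of a set of naturals. -/
noncomputable def upperAsymptoticDensity (X : Set ℕ) : ℝ :=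
  limsup (fun n : ℕ => ((X ∩ Set.Icc 1 n).ncard : ℝ) / n) atTop

/-- The arithmetic progression k·ℕ + h. -/
def AP (k h : ℕ) : Set ℕ := {x : ℕ | ∃ m : ℕ, x = k * m + h}

/-- A finite union of arithmetic progressions of ℕ. -/
def IsFinUnionAP (A : Set ℕ) : Prop :=
  ∃ s : Finset (ℕ × ℕ), (∀ p ∈ s, 0 < p.1) ∧ A = ⋃ p ∈ s, AP p.1 p.2

/-- The upper Buck density of a set of naturals. -/
noncomputable def buckDensity (X : Set ℕ) : ℝ :=
  sInf {d : ℝ | ∃ A : Set ℕ, IsFinUnionAP A ∧ X ⊆ A ∧ d = upperAsymptoticDensity A}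

/-- `rk k X` is the number of residues h ∈ [0, k-1] with X ∩ (k·ℕ + h) ≠ ∅. -/
noncomputable def rk (k : ℕ) (X : Set ℕ) : ℕ :=
  {h : ℕ | h < k ∧ (X ∩ AP k h).Nonempty}.ncard

/-- `wk μ k S` is the number of residues h ∈ [0, k-1] with μ(S ∩ (k·ℕ + h)) ≠ 0. -/
noncomputable def wk (μ : Set ℕ → ℝ) (k : ℕ) (S : Set ℕ) : ℕ :=
  {h : ℕ | h < k ∧ μ (S ∩ AP k h) ≠ 0}.ncard

/-!
An upper quasi-density is at most the proportion of residue classes modulo `k` that a set meets, and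
by the Chinese remainder theorem this proportion is submultiplicative over coprime moduli. If `p`
divides an element of `X` only when `p ^ 2` does, then `X` meets at most `p ^ 2 - (p - 1)` classes
modulo `p ^ 2`, so `X` is small as soon as this holds for primes with divergent sum of reciprocals,
for instance all primes in an invertible residue class.

Let `D` be the discriminant of the form. If `D` is not a square, some residue class modulo
`4 * |D|` consists, at its primes, of `p` for which `D` is a nonresidue; since
`4 * a * Q(x, y) = (2 * a * x + b * y) ^ 2 - D * y ^ 2`, such a `p` divides `Q(x, y)` only if it
divides both `x` and `y`. If `D = 0`, the values become squares after multiplication by a fixed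
nonzero integer.
-/

section ResidueCounts

/-- The residues modulo `k` of the elements of `X`, as a subset of `[0, k-1]`. Its cardinality is
`rk k X`; for `k = 0` it is empty. -/
def residueSet (k : ℕ) (X : Set ℕ) : Set ℕ :=
  {h | h < k ∧ (X ∩ AP k h).Nonempty}

variable {k m h x : ℕ} {X : Set ℕ}

lemma mem_AP_iff_mod_eq (hk : h < k) : x ∈ AP k h ↔ x % k = h := by
  constructor
  · rintro ⟨m, rfl⟩
    rw [Nat.mul_add_mod, Nat.mod_eq_of_lt hk]
  · rintro rfl
    exact ⟨x / k, (Nat.div_add_mod x k).symm⟩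

lemma mem_residueSet : h ∈ residueSet k X ↔ h < k ∧ ∃ x ∈ X, x % k = h :=
  and_congr_right fun hk ↦ exists_congr fun _ ↦ and_congr_right fun _ ↦ mem_AP_iff_mod_eq hk

lemma mod_mem_residueSet (hk : 0 < k) (hx : x ∈ X) : x % k ∈ residueSet k X :=
  mem_residueSet.mpr ⟨Nat.mod_lt x hk, x, hx, rfl⟩

lemma residueSet_subset_Iio (k : ℕ) (X : Set ℕ) : residueSet k X ⊆ Iio k :=
  fun _ hh ↦ hh.1

lemma finite_residueSet (k : ℕ) (X : Set ℕ) : (residueSet k X).Finite :=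
  (finite_Iio k).subset (residueSet_subset_Iio k X)

lemma rk_eq_ncard_residueSet (k : ℕ) (X : Set ℕ) : rk k X = (residueSet k X).ncard :=
  rfl

lemma rk_le_self (k : ℕ) (X : Set ℕ) : rk k X ≤ k :=
  (ncard_le_ncard (residueSet_subset_Iio k X) (finite_Iio k)).trans_eq <| by
    rw [← Finset.coe_Iio, ncard_coe_finset, Nat.card_Iio]

lemma rk_mul_le (hmk : m.Coprime k) (X : Set ℕ) : rk (m * k) X ≤ rk m X * rk k X := by
  simp only [rk_eq_ncard_residueSet, ← ncard_prod]
  refine ncard_le_ncard_of_injOn (fun h ↦ (h % m, h % k)) ?_ ?_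
    ((finite_residueSet m X).prod (finite_residueSet k X))
  · intro h hh
    obtain ⟨hlt, x, hx, rfl⟩ := mem_residueSet.mp hh
    have hpos : 0 < m * k := hlt.pos
    simp only [Nat.mod_mul_right_mod, Nat.mod_mul_left_mod]
    exact ⟨mod_mem_residueSet (pos_of_mul_pos_left hpos k.zero_le) hx,
      mod_mem_residueSet (pos_of_mul_pos_right hpos m.zero_le) hx⟩
  · intro h hh h' hh' heq
    obtain ⟨hm, hk⟩ := Prod.mk.inj heq
    exact ((Nat.modEq_and_modEq_iff_modEq_mul hmk).mp ⟨hm, hk⟩).eq_of_lt_of_lt hh.1 hh'.1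

lemma rk_prod_le {ι : Type*} {m : ι → ℕ} {s : Finset ι}
    (hm : (s : Set ι).Pairwise (Function.onFun Nat.Coprime m)) (X : Set ℕ) :
    rk (∏ i ∈ s, m i) X ≤ ∏ i ∈ s, rk (m i) X := by
  classical
  induction s using Finset.induction_on with
  | empty => exact rk_le_self 1 X
  | insert i s hi ih =>
    rw [Finset.prod_insert hi, Finset.prod_insert hi]
    have hcop : (m i).Coprime (∏ j ∈ s, m j) :=
      Nat.Coprime.prod_right fun j hj ↦ hm (Finset.mem_insert_self i s)
        (Finset.mem_insert_of_mem hj) (ne_of_mem_of_not_mem hj hi).symm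
    have hm_s := hm.mono (Finset.coe_subset.mpr (Finset.subset_insert i s))
    exact (rk_mul_le hcop X).trans (Nat.mul_le_mul_left _ (ih hm_s))

lemma rk_sq_add_le {p : ℕ} (hX : ∀ n ∈ X, p ∣ n → p ^ 2 ∣ n) :
    rk (p ^ 2) X + (p - 1) ≤ p ^ 2 := by
  set missed : Set ℕ := (p * ·) '' Ioo 0 p
  have hcard : missed.ncard = p - 1 := by
    have hinj : InjOn (p * ·) (Ioo 0 p) := fun i hi j _ hij ↦
      Nat.eq_of_mul_eq_mul_left (hi.1.trans hi.2) hij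
    rw [hinj.ncard_image, ← Finset.coe_Ioo, ncard_coe_finset, Nat.card_Ioo, tsub_zero]
  have hmissed : missed ⊆ Iio (p ^ 2) := by
    rintro _ ⟨j, hj, rfl⟩
    simpa only [mem_Iio, sq] using Nat.mul_lt_mul_of_pos_left hj.2 (hj.1.trans hj.2)
  have hdisj : Disjoint (residueSet (p ^ 2) X) missed := by
    refine disjoint_left.mpr ?_
    rintro _ hres ⟨j, hj, rfl⟩
    obtain ⟨-, x, hx, hxj⟩ := mem_residueSet.mp hres
    have hpx : p ∣ x :=
      (Nat.dvd_mod_iff (dvd_pow_self p two_ne_zero)).mp (hxj ▸ dvd_mul_right p j)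
    have hzero : p * j = 0 := hxj.symm.trans (Nat.mod_eq_zero_of_dvd (hX x hx hpx))
    exact (Nat.mul_pos (hj.1.trans hj.2) hj.1).ne' hzero
  calc rk (p ^ 2) X + (p - 1) = (residueSet (p ^ 2) X ∪ missed).ncard := by
        rw [rk_eq_ncard_residueSet, ← hcard, ncard_union_eq hdisj (finite_residueSet _ _)
          ((finite_Iio _).subset hmissed)]
    _ ≤ (Iio (p ^ 2)).ncard :=
        ncard_le_ncard (union_subset (residueSet_subset_Iio _ _) hmissed) (finite_Iio _)
    _ = p ^ 2 := by rw [← Finset.coe_Iio, ncard_coe_finset, Nat.card_Iio]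

end ResidueCounts

namespace IsUpperQuasiDensity

variable {μ : Set ℕ → ℝ}

lemma union_le (hμ : IsUpperQuasiDensity μ) (X Y : Set ℕ) : μ (X ∪ Y) ≤ μ X + μ Y :=
  hμ.2.2.1 X Y

lemma nonneg (hμ : IsUpperQuasiDensity μ) (X : Set ℕ) : 0 ≤ μ X := by
  have h := hμ.union_le X X
  rw [union_self] at h
  linarith

lemma empty (hμ : IsUpperQuasiDensity μ) : μ ∅ = 0 := by
  have h := hμ.2.2.2.1 ∅ 2 two_pos
  rw [image_empty, Nat.cast_ofNat] at h
  linarith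

lemma biUnion_le (hμ : IsUpperQuasiDensity μ) {ι : Type*} (s : Finset ι) (X : ι → Set ℕ) :
    μ (⋃ i ∈ s, X i) ≤ ∑ i ∈ s, μ (X i) := by
  classical
  induction s using Finset.induction_on with
  | empty => simp [hμ.empty]
  | insert i s hi ih =>
    rw [Finset.set_biUnion_insert, Finset.sum_insert hi]
    exact (hμ.union_le _ _).trans (add_le_add_right ih _)

lemma inter_AP_le (hμ : IsUpperQuasiDensity μ) {k : ℕ} (hk : 0 < k) (h : ℕ) (X : Set ℕ) :
    μ (X ∩ AP k h) ≤ 1 / k := by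
  have himage : X ∩ AP k h = (· + h) '' ((k * ·) '' {m | k * m + h ∈ X}) := by
    ext x
    constructor
    · rintro ⟨hx, m, rfl⟩
      exact ⟨k * m, ⟨m, hx, rfl⟩, rfl⟩
    · rintro ⟨_, ⟨m, hm, rfl⟩, rfl⟩
      exact ⟨hm, m, rfl⟩
  obtain ⟨-, hle_one, -, hdilate, htranslate⟩ := hμ
  rw [himage, htranslate, hdilate _ k hk]
  exact div_le_div_of_nonneg_right (hle_one _) k.cast_nonneg

lemma le_rk_div (hμ : IsUpperQuasiDensity μ) {k : ℕ} (hk : 0 < k) (X : Set ℕ) :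
    μ X ≤ rk k X / k := by
  have hfin := finite_residueSet k X
  have hcover : X = ⋃ h ∈ hfin.toFinset, X ∩ AP k h := by
    refine Subset.antisymm (fun x hx ↦ ?_) (iUnion₂_subset fun _ _ ↦ inter_subset_left)
    exact mem_biUnion (hfin.mem_toFinset.mpr (mod_mem_residueSet hk hx))
      ⟨hx, (mem_AP_iff_mod_eq (Nat.mod_lt x hk)).mpr rfl⟩
  calc μ X = μ (⋃ h ∈ hfin.toFinset, X ∩ AP k h) := congrArg μ hcover
    _ ≤ ∑ h ∈ hfin.toFinset, μ (X ∩ AP k h) := hμ.biUnion_le _ _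
    _ ≤ ∑ _h ∈ hfin.toFinset, (1 / k : ℝ) := Finset.sum_le_sum fun h _ ↦ hμ.inter_AP_le hk h X
    _ = rk k X / k := by
      rw [Finset.sum_const, nsmul_eq_mul, mul_one_div, rk_eq_ncard_residueSet,
        ncard_eq_toFinset_card _ hfin]

lemma le_exp_neg_sum (hμ : IsUpperQuasiDensity μ) {ι : Type*} {m : ι → ℕ} {s : Finset ι}
    (hpos : ∀ i ∈ s, 0 < m i) (hm : (s : Set ι).Pairwise (Function.onFun Nat.Coprime m))
    (X : Set ℕ) : μ X ≤ Real.exp (-∑ i ∈ s, (1 - (rk (m i) X : ℝ) / m i)) :=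
  calc μ X ≤ (rk (∏ i ∈ s, m i) X : ℝ) / (∏ i ∈ s, m i : ℕ) :=
        hμ.le_rk_div (Finset.prod_pos hpos) X
    _ ≤ (∏ i ∈ s, rk (m i) X : ℕ) / (∏ i ∈ s, m i : ℕ) := by
        gcongr
        exact rk_prod_le hm X
    _ = ∏ i ∈ s, (rk (m i) X : ℝ) / m i := by
        rw [Nat.cast_prod, Nat.cast_prod, Finset.prod_div_distrib]
    _ ≤ ∏ i ∈ s, Real.exp (-(1 - (rk (m i) X : ℝ) / m i)) :=
        Finset.prod_le_prod (fun _ _ ↦ by positivity) fun i _ ↦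
          (sub_sub_cancel 1 _).symm.trans_le (Real.one_sub_le_exp_neg _)
    _ = Real.exp (-∑ i ∈ s, (1 - (rk (m i) X : ℝ) / m i)) := by
        rw [← Real.exp_sum, Finset.sum_neg_distrib]

end IsUpperQuasiDensity

section SmallnessCriteria

variable {X : Set ℕ}

theorem smallSet_of_not_summable_one_sub_rk_div {ι : Type*} {m : ι → ℕ} (hpos : ∀ i, 0 < m i)
    (hm : Pairwise (Function.onFun Nat.Coprime m))
    (hX : ¬ Summable fun i ↦ 1 - (rk (m i) X : ℝ) / m i) : SmallSet X := by
  intro μ hμ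
  by_contra hne
  have hμX : 0 < μ X := (hμ.nonneg X).lt_of_ne' hne
  refine hX (summable_of_sum_le (c := -Real.log (μ X)) (fun i ↦ ?_) fun s ↦ ?_)
  · exact sub_nonneg.mpr <|
      div_le_one_of_le₀ (Nat.cast_le.mpr (rk_le_self (m i) X)) (m i).cast_nonneg
  · have hlog := (Real.log_le_iff_le_exp hμX).mpr
      (hμ.le_exp_neg_sum (fun i _ ↦ hpos i) (hm.set_pairwise s) X)
    linarith

theorem smallSet_of_forall_prime_dvd_imp_sq_dvd {P : Set ℕ} (hP : ∀ p ∈ P, p.Prime)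
    (hsum : ¬ Summable (indicator P fun n : ℕ ↦ (1 : ℝ) / n))
    (hX : ∀ p ∈ P, ∀ n ∈ X, p ∣ n → p ^ 2 ∣ n) : SmallSet X := by
  refine smallSet_of_not_summable_one_sub_rk_div (m := fun p : P ↦ (p : ℕ) ^ 2)
    (fun p ↦ pow_pos (hP p p.2).pos 2) (fun p q hpq ↦ ?_) fun hrk ↦ hsum ?_
  · exact Nat.coprime_pow_primes 2 2 (hP p p.2) (hP q q.2) (Subtype.coe_ne_coe.mpr hpq)
  · refine summable_subtype_iff_indicator.mp ?_
    refine (hrk.mul_left 2).of_nonneg_of_le (fun _ ↦ by simp only [Function.comp]; positivity) ?_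
    rintro ⟨p, hp⟩
    have hp_two : (2 : ℝ) ≤ p := mod_cast (hP p hp).two_le
    have hcount : (rk (p ^ 2) X : ℝ) + (p - 1) ≤ (p : ℝ) ^ 2 := by
      have h := rk_sq_add_le (hX p hp)
      rw [← Nat.cast_pred (hP p hp).pos]
      exact_mod_cast h
    simp only [Function.comp, Nat.cast_pow]
    rw [one_sub_div (by positivity), mul_div_assoc', div_le_div_iff₀ (by positivity)
      (by positivity)]
    nlinarith

end SmallnessCriteria
section PrimesInResidueClass

open ArithmeticFunction vonMangoldt

variable {q : ℕ} (a : ZMod q)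

lemma sub_one_mul_log_div_rpow_le {t x : ℝ} (ht : 0 < t) (hx : 1 < x) :
    (x - 1) * (Real.log t / t ^ x) ≤ 1 / t := by
  have hlog : Real.log t * (x - 1) ≤ t ^ (x - 1) :=
    (le_div_iff₀ (sub_pos.mpr hx)).mp (Real.log_le_rpow_div ht.le (sub_pos.mpr hx))
  calc (x - 1) * (Real.log t / t ^ x) = Real.log t * (x - 1) / t ^ x := by ring
    _ ≤ t ^ (x - 1) / t ^ x := by gcongr
    _ = 1 / t := by
      rw [← Real.rpow_sub ht, sub_sub_cancel_left, Real.rpow_neg_one, one_div]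

lemma sub_one_mul_residueClass_div_rpow_le {x : ℝ} (hx : x ∈ Ioc 1 2) (n : ℕ) :
    (x - 1) * (residueClass a n / (n : ℝ) ^ x) ≤
      (if n.Prime then 0 else residueClass a n) / n +
        indicator {p : ℕ | p.Prime ∧ (p : ZMod q) = a} (fun n : ℕ ↦ (1 : ℝ) / n) n := by
  obtain ⟨hx_one, hx_two⟩ := hx
  have hindicator : 0 ≤ indicator {p : ℕ | p.Prime ∧ (p : ZMod q) = a}
      (fun n : ℕ ↦ (1 : ℝ) / n) n := indicator_nonneg (fun _ _ ↦ by positivity) n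
  rcases n.eq_zero_or_pos with rfl | hn
  · simpa only [residueClass_apply_zero, zero_div, mul_zero, ite_self, zero_add] using hindicator
  have hn_pos : (0 : ℝ) < n := mod_cast hn
  by_cases hp : n.Prime
  · rw [if_pos hp, zero_div, zero_add]
    by_cases hna : (n : ZMod q) = a
    · have hlog : residueClass a n = Real.log n :=
        (indicator_of_mem (s := {n : ℕ | (n : ZMod q) = a}) hna _).trans
          (vonMangoldt_apply_prime hp)
      rw [indicator_of_mem (mem_ofPred.mpr ⟨hp, hna⟩), hlog]
      exact sub_one_mul_log_div_rpow_le hn_pos hx_one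
    · have hzero : residueClass a n = 0 :=
        indicator_of_notMem (s := {n : ℕ | (n : ZMod q) = a}) hna _
      rw [hzero, zero_div, mul_zero]
      exact hindicator
  · rw [if_neg hp, indicator_of_notMem fun h ↦ hp h.1, add_zero]
    calc (x - 1) * (residueClass a n / (n : ℝ) ^ x) ≤ 1 * (residueClass a n / (n : ℝ) ^ x) := by
          gcongr
          · exact div_nonneg (residueClass_nonneg a n) (by positivity)
          · linarith
      _ ≤ residueClass a n / n := by
          rw [one_mul]
          exact div_le_div_of_nonneg_left (residueClass_nonneg a n) hn_pos
            (Real.self_le_rpow_of_one_le (mod_cast hn) hx_one.le)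

lemma tendsto_sub_one_mul_residueClass_div_rpow (n : ℕ) :
    Tendsto (fun x : ℝ ↦ (x - 1) * (residueClass a n / (n : ℝ) ^ x)) (𝓝[>] 1) (𝓝 0) := by
  rcases n.eq_zero_or_pos with rfl | hn
  · simp [residueClass_apply_zero]
  have hn_ne : (n : ℝ) ≠ 0 := by positivity
  have hcont : ContinuousAt (fun x : ℝ ↦ (x - 1) * (residueClass a n / (n : ℝ) ^ x)) 1 :=
    (continuousAt_id.sub continuousAt_const).mul <|
      continuousAt_const.div (Real.continuousAt_const_rpow hn_ne) (by positivity)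
  simpa only [sub_self, zero_mul] using hcont.tendsto.mono_left nhdsWithin_le_nhds

variable {a}

lemma tendsto_sub_one_mul_tsum_residueClass
    (hsum : Summable (indicator {p : ℕ | p.Prime ∧ (p : ZMod q) = a} fun n : ℕ ↦ (1 : ℝ) / n)) :
    Tendsto (fun x : ℝ ↦ (x - 1) * ∑' n : ℕ, residueClass a n / (n : ℝ) ^ x) (𝓝[>] 1) (𝓝 0) := by
  have hlim := tendsto_tsum_of_dominated_convergence
    ((summable_residueClass_non_primes_div a).add hsum)
    (tendsto_sub_one_mul_residueClass_div_rpow a) <| by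
      filter_upwards [Ioc_mem_nhdsGT one_lt_two] with x hx n
      rw [Real.norm_of_nonneg (mul_nonneg (sub_nonneg.mpr hx.1.le)
        (div_nonneg (residueClass_nonneg a n) (by positivity)))]
      exact sub_one_mul_residueClass_div_rpow_le a hx n
  simpa only [tsum_mul_left, tsum_zero] using hlim

-- If the sum converged, `∑ Λ(n) n⁻ˣ` over the class would be `o(1 / (x - 1))` as `x → 1⁺` by
-- dominated convergence, but it has a simple pole with residue `1 / φ(q)`.
theorem not_summable_one_div_on_primes_residueClass [NeZero q] (ha : IsUnit a) :
    ¬ Summable (indicator {p : ℕ | p.Prime ∧ (p : ZMod q) = a} fun n : ℕ ↦ (1 : ℝ) / n) := by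
  intro hsum
  obtain ⟨C, hC⟩ := LSeries_residueClass_lower_bound ha
  have hlower : Tendsto (fun x : ℝ ↦ (q.totient : ℝ)⁻¹ - C * (x - 1)) (𝓝[>] 1)
      (𝓝 (q.totient : ℝ)⁻¹) := by
    have hcont : Continuous fun x : ℝ ↦ (q.totient : ℝ)⁻¹ - C * (x - 1) := by fun_prop
    simpa only [sub_self, mul_zero, sub_zero] using
      (hcont.tendsto 1).mono_left nhdsWithin_le_nhds
  have hnonpos : (q.totient : ℝ)⁻¹ ≤ 0 := by
    refine le_of_tendsto_of_tendsto hlower (tendsto_sub_one_mul_tsum_residueClass hsum) ?_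
    filter_upwards [Ioc_mem_nhdsGT one_lt_two] with x hx
    have hx_pos : 0 < x - 1 := sub_pos.mpr hx.1
    calc (q.totient : ℝ)⁻¹ - C * (x - 1) = (x - 1) * ((q.totient : ℝ)⁻¹ / (x - 1) - C) := by
          field_simp
      _ ≤ (x - 1) * ∑' n : ℕ, residueClass a n / (n : ℝ) ^ x := by
          gcongr
          exact hC hx
  exact hnonpos.not_gt (inv_pos.mpr (mod_cast q.totient.pos_of_neZero))

end PrimesInResidueClass

theorem smallSet_of_forall_prime_residueClass_dvd_imp_sq_dvd {q : ℕ} [NeZero q] {r : ZMod q}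
    (hr : IsUnit r) {X : Set ℕ}
    (hX : ∀ p : ℕ, p.Prime → (p : ZMod q) = r → ∀ n ∈ X, p ∣ n → p ^ 2 ∣ n) : SmallSet X :=
  smallSet_of_forall_prime_dvd_imp_sq_dvd (fun _ hp ↦ hp.1)
    (not_summable_one_div_on_primes_residueClass hr) fun p hp ↦ hX p hp.1 hp.2

section JacobiSymbol

open scoped NumberTheorySymbols

lemma odd_iff_odd_of_modEq_four_mul {m k n : ℕ} (h : m ≡ k [MOD 4 * n]) : Odd m ↔ Odd k := by
  have hfour : m % 4 = k % 4 := h.of_mul_right n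
  rw [Nat.odd_iff, Nat.odd_iff]
  omega

lemma jacobiSym_eq_of_modEq {D : ℤ} {m k : ℕ} (hm : Odd m) (h : m ≡ k [MOD 4 * D.natAbs]) :
    J(D | m) = J(D | k) := by
  rw [jacobiSym.mod_right D hm, h,
    ← jacobiSym.mod_right D ((odd_iff_odd_of_modEq_four_mul h).mp hm)]

lemma jacobiSym_eq_one_of_modEq_one {D : ℤ} {m : ℕ} (h : m ≡ 1 [MOD 4 * D.natAbs]) :
    J(D | m) = 1 :=
  (jacobiSym_eq_of_modEq ((odd_iff_odd_of_modEq_four_mul h).mpr odd_one) h).trans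
    (jacobiSym.one_right D)

lemma isUnit_natCast_of_jacobiSym_ne_zero {D : ℤ} {m : ℕ} (hm : Odd m) (hJ : J(D | m) ≠ 0) :
    IsUnit (m : ZMod (4 * D.natAbs)) := by
  have hgcd : D.gcd m = 1 := by
    by_contra hgcd
    exact hJ (jacobiSym.eq_zero_iff.mpr ⟨hm.pos.ne', hgcd⟩)
  rw [ZMod.isUnit_iff_coprime]
  exact Nat.Coprime.mul_right (Nat.Coprime.pow_right 2 hm.coprime_two_right)
    (Nat.coprime_comm.mp hgcd)

lemma exists_modEq_one_and_jacobiSym_two_eq_neg_one {n : ℕ} (hn : Odd n) :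
    ∃ m : ℕ, m ≡ 1 [MOD 4 * n] ∧ J(2 | m) = -1 := by
  have hmod : (4 * n + 1) % 8 = 5 := by
    rw [Nat.odd_iff] at hn
    omega
  refine ⟨4 * n + 1, by simp [Nat.ModEq], ?_⟩
  rw [jacobiSym.at_two (Nat.odd_iff.mpr (by omega)), ZMod.χ₈_nat_mod_eight, hmod]
  rfl

lemma exists_modEq_one_and_jacobiSym_odd_prime_eq_neg_one {l n : ℕ} (hl : l.Prime)
    (hl_odd : Odd l) (hln : ¬ l ∣ n) : ∃ m : ℕ, m ≡ 1 [MOD 4 * n] ∧ J(l | m) = -1 := by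
  have : Fact l.Prime := ⟨hl⟩
  obtain ⟨r, hr⟩ := FiniteField.exists_nonsquare (F := ZMod l) <| by
    rw [ZMod.ringChar_zmod_n]
    exact hl_odd.ne_two_of_dvd_nat dvd_rfl
  have hcop : (4 * n).Coprime l :=
    Nat.Coprime.mul_left (Nat.Coprime.pow_left 2 hl_odd.coprime_two_left)
      ((hl.coprime_iff_not_dvd.mpr hln).symm)
  obtain ⟨m, hm_one, hm_r⟩ := Nat.chineseRemainder hcop 1 r.val
  have hm_cast : ((m : ℤ) : ZMod l) = r := by
    rw [Int.cast_natCast, (ZMod.natCast_eq_natCast_iff _ _ _).mpr hm_r, ZMod.natCast_zmod_val]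
  refine ⟨m, hm_one, ?_⟩
  rw [jacobiSym.quadratic_reciprocity_one_mod_four' hl_odd (hm_one.of_mul_right n),
    ZMod.nonsquare_iff_jacobiSym_eq_neg_one, hm_cast]
  exact hr

lemma exists_modEq_one_and_jacobiSym_prime_eq_neg_one {l n : ℕ} (hl : l.Prime) (hln : ¬ l ∣ n) :
    ∃ m : ℕ, m ≡ 1 [MOD 4 * n] ∧ J(l | m) = -1 := by
  rcases hl.eq_two_or_odd' with rfl | hl_odd
  · exact exists_modEq_one_and_jacobiSym_two_eq_neg_one
      (Nat.not_even_iff_odd.mp (even_iff_two_dvd.not.mpr hln))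
  · exact exists_modEq_one_and_jacobiSym_odd_prime_eq_neg_one hl hl_odd hln

lemma exists_prime_pow_odd_mul_of_not_isSquare {n : ℕ} (hn : ¬ IsSquare n) :
    ∃ l k m : ℕ, l.Prime ∧ ¬ l ∣ m ∧ n = l ^ (2 * k + 1) * m := by
  have hn_ne : n ≠ 0 := fun h ↦ hn (h ▸ IsSquare.zero)
  obtain ⟨l, hl_mem, hl_odd⟩ : ∃ l ∈ n.primeFactors, Odd (n.factorization l) := by
    by_contra! heven
    refine hn ?_
    rw [← Nat.prod_factorization_pow_eq_self hn_ne]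
    exact Finset.isSquare_prod _ fun l hl ↦
      (Nat.not_odd_iff_even.mp (heven l hl)).isSquare_pow l
  have hl := Nat.prime_of_mem_primeFactors hl_mem
  obtain ⟨k, hk⟩ := hl_odd
  exact ⟨l, k, n / l ^ n.factorization l, hl, Nat.not_dvd_ordCompl hl hn_ne,
    hk ▸ (Nat.ordProj_mul_ordCompl_eq_self n l).symm⟩

lemma exists_jacobiSym_eq_neg_one_of_not_isSquare_natAbs {D : ℤ} (hD : ¬ IsSquare D.natAbs) :
    ∃ m : ℕ, Odd m ∧ J(D | m) = -1 := by
  obtain ⟨l, k, n, hl, hln, hn⟩ := exists_prime_pow_odd_mul_of_not_isSquare hD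
  obtain ⟨m, hm_one, hm_l⟩ := exists_modEq_one_and_jacobiSym_prime_eq_neg_one hl hln
  have hm_rest : J(D.sign * n | m) = 1 := by
    refine jacobiSym_eq_one_of_modEq_one ?_
    have hD_ne : D ≠ 0 := fun h ↦ hD (h ▸ IsSquare.zero)
    rwa [Int.natAbs_mul, Int.natAbs_sign_of_ne_zero hD_ne, one_mul]
  have hfactor : D = D.sign * n * (l : ℤ) ^ (2 * k + 1) := by
    conv_lhs => rw [← Int.sign_mul_natAbs D, hn]
    push_cast
    ring
  refine ⟨m, (odd_iff_odd_of_modEq_four_mul hm_one).mpr odd_one, ?_⟩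
  rw [hfactor, jacobiSym.mul_left, hm_rest, jacobiSym.pow_left, hm_l, one_mul,
    Odd.neg_one_pow ⟨k, rfl⟩]

-- Modulo `4 * s ^ 2 - 1`, `-s ^ 2` is `-1` up to the square factor `4`.
lemma exists_jacobiSym_neg_sq_eq_neg_one {s : ℕ} (hs : 0 < s) :
    ∃ m : ℕ, Odd m ∧ J(-(s : ℤ) ^ 2 | m) = -1 := by
  obtain ⟨m, hm⟩ : ∃ m, 4 * s ^ 2 = m + 1 := Nat.exists_eq_succ_of_ne_zero (by positivity)
  have hm_four : m % 4 = 3 := by omega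
  have hm_odd : Odd m := Nat.odd_iff.mpr (by omega)
  refine ⟨m, hm_odd, ?_⟩
  calc J(-(s : ℤ) ^ 2 | m) = J(4 * -(s : ℤ) ^ 2 | m) := by
        rw [jacobiSym.mul_left, jacobiSym.at_four hm_odd, one_mul]
    _ = J(-1 | m) := jacobiSym.mod_left' <| Int.modEq_iff_dvd.mpr ⟨1, by
        zify at hm
        linear_combination hm⟩
    _ = -1 := by rw [jacobiSym.at_neg_one hm_odd, ZMod.χ₄_nat_three_mod_four hm_four]

theorem exists_jacobiSym_eq_neg_one_of_not_isSquare {D : ℤ} (hD : ¬ IsSquare D) :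
    ∃ m : ℕ, Odd m ∧ J(D | m) = -1 := by
  by_cases hsq : IsSquare D.natAbs
  · obtain ⟨s, hs⟩ := hsq
    rcases Int.natAbs_eq D with hD_eq | hD_eq
    · exact absurd ⟨s, by rw [hD_eq, hs, Nat.cast_mul]⟩ hD
    · rw [hD_eq, hs, Nat.cast_mul, ← sq]
      refine exists_jacobiSym_neg_sq_eq_neg_one (Nat.pos_of_ne_zero ?_)
      rintro rfl
      exact hD ⟨0, by simpa using hs⟩
  · exact exists_jacobiSym_eq_neg_one_of_not_isSquare_natAbs hsq

end JacobiSymbol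

section BinaryQuadraticForms

open scoped NumberTheorySymbols

variable {a b c : ℤ}

lemma sq_dvd_of_dvd_of_jacobiSym_discrim_eq_neg_one {p : ℕ} (hp : p.Prime)
    (hJ : J(discrim a b c | p) = -1) {x y : ℤ}
    (hdvd : (p : ℤ) ∣ a * x ^ 2 + b * x * y + c * y ^ 2) :
    (p : ℤ) ^ 2 ∣ a * x ^ 2 + b * x * y + c * y ^ 2 := by
  have : Fact p.Prime := ⟨hp⟩
  have hp_int : Prime (p : ℤ) := Nat.prime_iff_prime_int.mp hp
  have hp_two_a : ¬ (p : ℤ) ∣ 2 * a := fun h ↦ by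
    have hdvd_sq_sub : (p : ℤ) ∣ b ^ 2 - discrim a b c * 1 ^ 2 :=
      (h.mul_right (2 * c)).trans (dvd_of_eq (by rw [discrim]; ring))
    exact hp_int.not_dvd_one (jacobiSym.prime_dvd_of_eq_neg_one hJ hdvd_sq_sub).2
  have hcomplete_square : (p : ℤ) ∣ (2 * a * x + b * y) ^ 2 - discrim a b c * y ^ 2 :=
    (hdvd.mul_left (4 * a)).trans (dvd_of_eq (by rw [discrim]; ring))
  obtain ⟨hlinear, hy⟩ := jacobiSym.prime_dvd_of_eq_neg_one hJ hcomplete_square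
  have hx : (p : ℤ) ∣ x :=
    (hp_int.dvd_or_dvd ((dvd_add_left (hy.mul_left b)).mp hlinear)).resolve_left hp_two_a
  obtain ⟨u, rfl⟩ := hx
  obtain ⟨v, rfl⟩ := hy
  exact ⟨a * u ^ 2 + b * u * v + c * v ^ 2, by ring⟩

lemma exists_forall_isSquare_four_mul_of_discrim_eq_zero (hD : discrim a b c = 0) :
    ∃ e : ℤ, e ≠ 0 ∧ ∀ x y : ℤ, IsSquare (4 * e * (a * x ^ 2 + b * x * y + c * y ^ 2)) := by
  rw [discrim] at hD
  by_cases ha : a = 0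
  · subst ha
    obtain rfl : b = 0 := by simpa using hD
    by_cases hc : c = 0
    · subst hc
      exact ⟨1, one_ne_zero, fun x y ↦ ⟨0, by ring⟩⟩
    · exact ⟨c, hc, fun x y ↦ ⟨2 * c * y, by ring⟩⟩
  · exact ⟨a, ha, fun x y ↦ ⟨2 * a * x + b * y, by linear_combination -y ^ 2 * hD⟩⟩

variable {X : Set ℕ}

theorem smallSet_of_forall_isSquare_mul {e : ℤ} (he : e ≠ 0)
    (hX : ∀ n ∈ X, IsSquare (e * n)) : SmallSet X := by
  have : NeZero e.natAbs := ⟨Int.natAbs_ne_zero.mpr he⟩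
  refine smallSet_of_forall_prime_residueClass_dvd_imp_sq_dvd (q := e.natAbs) isUnit_one ?_
  intro p hp hp_one n hn hpn
  obtain ⟨t, ht⟩ := hX n hn
  have hcop : IsCoprime ((p : ℤ) ^ 2) e := by
    refine IsCoprime.pow_left (Int.isCoprime_iff_gcd_eq_one.mpr ?_)
    exact (ZMod.isUnit_iff_coprime p e.natAbs).mp (hp_one ▸ isUnit_one)
  have hpt : (p : ℤ) ∣ t := by
    refine (Nat.prime_iff_prime_int.mp hp).dvd_of_dvd_pow (n := 2) ?_
    rw [sq, ← ht]
    exact (Int.natCast_dvd_natCast.mpr hpn).mul_left e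
  have hsq_dvd : (p : ℤ) ^ 2 ∣ e * n := by
    rw [ht, ← sq]
    exact pow_dvd_pow_of_dvd hpt 2
  exact_mod_cast hcop.dvd_of_dvd_mul_left hsq_dvd

theorem smallSet_of_discrim_eq_zero (hD : discrim a b c = 0)
    (hX : ∀ n ∈ X, ∃ x y : ℤ, (n : ℤ) = a * x ^ 2 + b * x * y + c * y ^ 2) : SmallSet X := by
  obtain ⟨e, he, hsquare⟩ := exists_forall_isSquare_four_mul_of_discrim_eq_zero hD
  refine smallSet_of_forall_isSquare_mul (mul_ne_zero four_ne_zero he) fun n hn ↦ ?_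
  obtain ⟨x, y, hxy⟩ := hX n hn
  exact hxy ▸ hsquare x y

theorem smallSet_of_not_isSquare_discrim (hD : ¬ IsSquare (discrim a b c))
    (hX : ∀ n ∈ X, ∃ x y : ℤ, (n : ℤ) = a * x ^ 2 + b * x * y + c * y ^ 2) : SmallSet X := by
  obtain ⟨m, hm_odd, hJ⟩ := exists_jacobiSym_eq_neg_one_of_not_isSquare hD
  have hJ_ne : J(discrim a b c | m) ≠ 0 := by
    rw [hJ]
    decide
  have hD_ne : (discrim a b c).natAbs ≠ 0 :=
    Int.natAbs_ne_zero.mpr fun h ↦ hD (h ▸ IsSquare.zero)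
  have : NeZero (4 * (discrim a b c).natAbs) := ⟨mul_ne_zero four_ne_zero hD_ne⟩
  refine smallSet_of_forall_prime_residueClass_dvd_imp_sq_dvd
    (isUnit_natCast_of_jacobiSym_ne_zero hm_odd hJ_ne) ?_
  intro p hp hpm n hn hpn
  have hmod : p ≡ m [MOD 4 * (discrim a b c).natAbs] :=
    (ZMod.natCast_eq_natCast_iff _ _ _).mp hpm
  have hJp : J(discrim a b c | p) = -1 :=
    (jacobiSym_eq_of_modEq ((odd_iff_odd_of_modEq_four_mul hmod).mpr hm_odd) hmod).trans hJ
  obtain ⟨x, y, hxy⟩ := hX n hn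
  have hsq_dvd : (p : ℤ) ^ 2 ∣ n := hxy ▸
    sq_dvd_of_dvd_of_jacobiSym_discrim_eq_neg_one hp hJp (hxy ▸ Int.natCast_dvd_natCast.mpr hpn)
  exact_mod_cast hsq_dvd

end BinaryQuadraticForms

theorem smallSet_binary_quadratic_form_general {a b c : ℤ}
    (hD : discrim a b c = 0 ∨ ¬ IsSquare (discrim a b c)) {X : Set ℕ}
    (hX : ∀ n ∈ X, ∃ x y : ℤ, (n : ℤ) = a * x ^ 2 + b * x * y + c * y ^ 2) : SmallSet X :=
  hD.elim (smallSet_of_discrim_eq_zero · hX) (smallSet_of_not_isSquare_discrim · hX)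

/-- If D = b² - 4ac is zero or not a perfect square, then the set of values of
the binary quadratic form ax² + bxy + cy² over ℕ is small. -/
theorem smallSet_binary_quadratic_form (a b c : ℕ)
    (hD : (b : ℤ) ^ 2 - 4 * a * c = 0 ∨ ∀ z : ℤ, (b : ℤ) ^ 2 - 4 * a * c ≠ z ^ 2) :
    SmallSet {n : ℕ | ∃ x y : ℕ, n = a * x ^ 2 + b * x * y + c * y ^ 2} :=
  smallSet_binary_quadratic_form_general
    (hD.imp_right fun h ↦ isSquare_iff_exists_sq _ |>.not.mpr (not_exists.mpr h))
    fun _ ⟨x, y, hn⟩ ↦ ⟨x, y, by exact_mod_cast hn⟩
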